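/- Fix M, N, s with 0 ≤ s ≤ M, N even, and N > 4M − 4. Then there is a nonempty Zariski-open subset of the parameter space of pairs of s-overlapping N-element frames on ℝ^M such that for every pair (U,V) = ((α_0,…,α_{N−1}),(β_0,…,β_{N−1})) in this subset, there is no pair (A,B) of distinct rank-one real symmetric M×M matrices satisfying α_0ᵀ A α_0 = β_0ᵀ B β_0, α_{N/2}ᵀ A α_{N/2} = β_{N/2}ᵀ B β_{N/2}, and α_kᵀ A α_k + α_{N−k}ᵀ A α_{N−k} = β_kᵀ B β_k + β_{N−k}ᵀ B β_{N−k} for all k = 1,…,N/2 − 1. -/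

import Mathlib

/-!
STATEMENT 18: For 0 ≤ s ≤ M, N even, N > 4M−4: a generic pair of s-overlapping
N-element frames on ℝ^M admits no pair (A,B) of distinct rank-one real symmetric
matrices satisfying the system of equations (★) coming from the map B_{UV}.
-/

open Matrix

noncomputable section

/-- Row space of a real M×N matrix (columns indexed mod N); this is the image of the
frame map L_U. -/
def rowSpanR {M N : ℕ} [NeZero N] (B : Matrix (Fin M) (ZMod N) ℝ) :
    Submodule ℝ (ZMod N → ℝ) :=
  Submodule.span ℝ (Set.range fun i => B i)

/-- The parameter space of pairs of s-overlapping N-element frames on ℝ^M: both frame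
matrices have full rank M, their first s rows agree, and the intersection of the images
of the frame maps has dimension exactly s. -/
def IsSOverlappingPairR {M N : ℕ} [NeZero N] (s : ℕ)
    (p : Matrix (Fin M) (ZMod N) ℝ × Matrix (Fin M) (ZMod N) ℝ) : Prop :=
  p.1.rank = M ∧ p.2.rank = M ∧
  (∀ i : Fin M, (i : ℕ) < s → p.1 i = p.2 i) ∧
  Module.finrank ℝ ↥(rowSpanR p.1 ⊓ rowSpanR p.2) = s

/-- A Zariski-open subset of the space of pairs of real M×N matrices. -/
def IsZariskiOpenPairR {M N : ℕ}
    (W : Set (Matrix (Fin M) (ZMod N) ℝ × Matrix (Fin M) (ZMod N) ℝ)) : Prop :=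
  ∃ I : Set (MvPolynomial ((Fin M × ZMod N) ⊕ (Fin M × ZMod N)) ℝ),
    W = {p | ∃ q ∈ I, MvPolynomial.eval
      (Sum.elim (fun a => p.1 a.1 a.2) (fun a => p.2 a.1 a.2)) q ≠ 0}

/-- The system of equations (★) relating the frames (α_n), (β_n) (the columns of the two
frame matrices) and the symmetric matrices A, B (N = 2·Nh):
α_0ᵀAα_0 = β_0ᵀBβ_0, α_{N/2}ᵀAα_{N/2} = β_{N/2}ᵀBβ_{N/2}, and
α_kᵀAα_k + α_{N−k}ᵀAα_{N−k} = β_kᵀBβ_k + β_{N−k}ᵀBβ_{N−k} for k = 1,…,N/2−1. -/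
def SatisfiesSystem {M N : ℕ} [NeZero N] (Nh : ℕ)
    (P Q : Matrix (Fin M) (ZMod N) ℝ) (A B : Matrix (Fin M) (Fin M) ℝ) : Prop :=
  (fun i => P i 0) ⬝ᵥ (A *ᵥ fun i => P i 0) = (fun i => Q i 0) ⬝ᵥ (B *ᵥ fun i => Q i 0) ∧
  (fun i => P i (Nh : ZMod N)) ⬝ᵥ (A *ᵥ fun i => P i (Nh : ZMod N)) =
    (fun i => Q i (Nh : ZMod N)) ⬝ᵥ (B *ᵥ fun i => Q i (Nh : ZMod N)) ∧
  ∀ k : ℕ, 0 < k → k < Nh →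
    (fun i => P i (k : ZMod N)) ⬝ᵥ (A *ᵥ fun i => P i (k : ZMod N)) +
      (fun i => P i (-(k : ZMod N))) ⬝ᵥ (A *ᵥ fun i => P i (-(k : ZMod N))) =
    (fun i => Q i (k : ZMod N)) ⬝ᵥ (B *ᵥ fun i => Q i (k : ZMod N)) +
      (fun i => Q i (-(k : ZMod N))) ⬝ᵥ (B *ᵥ fun i => Q i (-(k : ZMod N)))

/-!
Suppose no nonzero polynomial in the entries of the pair vanished on all pairs admitting such `A`
and `B`. Then the entries are algebraically independent in the ring of functions on the set of
these bad configurations, hence also in the residue field of a suitable prime ideal: over that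
field there is a bad configuration `(c, A, B)` with `c` a generic matrix containing the rows of
both frames.

Let `C` be the matrix of the difference of the forms `A` and `B`, read on the rows of `c`. A
symmetric matrix of rank one is determined by `M` numbers, so after scaling the entries of `C` are
generated by at most `2 * M - 1` elements. Each of the `N / 2 + 1` equations is a nontrivial
quadratic equation over `C` in which only the columns of `c` in its own block occur, so it makes one
further entry of `c` algebraic over the others. Comparing transcendence degrees gives
`N / 2 + 1 ≤ 2 * M - 1`, contradicting `N > 4 * M - 4`.
-/

section GenericPoint

universe u

variable {k σ : Type*} {A : Type u} [CommRing k] [IsDomain k] [CommRing A] [Algebra k A]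
  {x : σ → A}

theorem exists_algHom_field_algebraicIndependent (hx : AlgebraicIndependent k x) :
    ∃ (K : Type u) (_ : Field K) (_ : Algebra k K) (φ : A →ₐ[k] K),
      AlgebraicIndependent k (φ ∘ x) := by
  let S : Submonoid A := (nonZeroDivisors (MvPolynomial σ k)).map (MvPolynomial.aeval x)
  have hS : Disjoint ((⊥ : Ideal A) : Set A) S := by
    rw [Set.disjoint_left]
    rintro _ rfl ⟨q, hq, hq0⟩
    exact nonZeroDivisors.ne_zero hq (hx.eq_zero_of_aeval_eq_zero q hq0)
  obtain ⟨P, hP, -, hPS⟩ := Ideal.exists_le_prime_disjoint _ S hS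
  refine ⟨P.ResidueField, inferInstance, inferInstance, Algebra.algHom k A _, ?_⟩
  rw [algebraicIndependent_iff]
  intro q hq
  by_contra hq0
  have hqP : MvPolynomial.aeval x q ∈ P := by
    rw [← Ideal.algebraMap_residueField_eq_zero, ← hq]
    exact MvPolynomial.comp_aeval_apply x (Algebra.algHom k A P.ResidueField) q
  exact Set.disjoint_left.mp hPS hqP ⟨q, mem_nonZeroDivisors_of_ne_zero hq0, rfl⟩

end GenericPoint

theorem exists_map_ne_zero_of_forall_exists_ne_zero {X ι k R : Type*} [Finite ι] [Field k]
    [Semiring R] [Nontrivial R] (φ : (X → k) →+* R) {f : ι → X → k} (hf : ∀ t, ∃ i, f i t ≠ 0) :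
    ∃ i, φ (f i) ≠ 0 := by
  classical
  cases nonempty_fintype ι
  choose j hj using hf
  have hone : ∑ i, f i * (fun t => if i = j t then (f i t)⁻¹ else 0) = 1 := by
    ext t
    simp [Finset.sum_apply, hj]
  by_contra! h
  simpa [h] using congrArg φ hone

section RelativeClosure

variable (k : Type*) {K : Type*} [Field k] [Field K] [Algebra k K]

/-- The relative algebraic closure in `K` of the subalgebra `k[S]` generated by `S`. -/
def closureAdjoin (S : Set K) : Subalgebra k K :=
  (Subalgebra.algebraicClosure (Algebra.adjoin k S) K).restrictScalars k

variable {k} {S : Set K}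

theorem adjoin_le_closureAdjoin : Algebra.adjoin k S ≤ closureAdjoin k S := fun x hx =>
  (Subalgebra.algebraicClosure (Algebra.adjoin k S) K).algebraMap_mem ⟨x, hx⟩

theorem subset_closureAdjoin : S ⊆ closureAdjoin k S :=
  Algebra.subset_adjoin.trans adjoin_le_closureAdjoin

theorem mem_closureAdjoin_of_quadratic {a b c t : K} (ha : a ∈ closureAdjoin k S)
    (hb : b ∈ closureAdjoin k S) (hc : c ∈ closureAdjoin k S) (ha0 : a ≠ 0)
    (h : a * t ^ 2 + b * t + c = 0) : t ∈ closureAdjoin k S := by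
  have ht : IsAlgebraic (Subalgebra.algebraicClosure (Algebra.adjoin k S) K) t := by
    refine ⟨.C ⟨a, ha⟩ * .X ^ 2 + .C ⟨b, hb⟩ * .X + .C ⟨c, hc⟩, fun h0 => ha0 ?_, ?_⟩
    · simpa using congrArg (fun p => (p.coeff 2 : K)) h0
    · simpa [Algebra.algebraMap_ofSubsemiring_apply] using h
  exact ht.restrictScalars (Algebra.adjoin k S)

theorem card_le_card_of_forall_mem_closureAdjoin {σ : Type*} [Fintype σ] {x : σ → K}
    (hx : AlgebraicIndependent k x) {T : Finset K} (h : ∀ i, x i ∈ closureAdjoin k (T : Set K)) :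
    Fintype.card σ ≤ T.card := by
  have hsub : Set.range x ⊆ (AlgebraicIndependent.matroid k K).closure T := by
    rintro _ ⟨i, rfl⟩
    rw [AlgebraicIndependent.matroid_closure_eq]
    exact h i
  have hcard := ((AlgebraicIndependent.matroid_indep_iff.mpr
    hx.coe_range).encard_le_eRk_of_subset hsub).trans
    ((Matroid.eRk_closure_eq _ _).trans_le (Matroid.eRk_le_encard _ _))
  rw [← Set.image_univ, hx.injective.encard_image] at hcard
  simpa using hcard

end RelativeClosure

section QuadraticForm

variable {κ ν ε k K : Type*} [Fintype κ]

theorem dotProduct_mulVec_mem {R : Type*} [CommRing k] [CommRing R] [Algebra k R]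
    {F : Subalgebra k R} {C : Matrix κ κ R} {v w : κ → R} (hC : ∀ i j, C i j ∈ F)
    (hv : ∀ i, v i ∈ F) (hw : ∀ i, w i ∈ F) : v ⬝ᵥ C *ᵥ w ∈ F :=
  sum_mem fun i _ => mul_mem (hv i) (sum_mem fun j _ => mul_mem (hC i j) (hw j))

theorem exists_natCast_dotProduct_mulVec_ne_zero {R : Type*} [CommRing R] [NoZeroDivisors R]
    [NeZero (2 : R)] {C : Matrix κ κ R} (hC : C.IsSymm) (hC0 : C ≠ 0) :
    ∃ (e : κ → ℕ) (i : κ), e i = 1 ∧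
      (fun l => (e l : R)) ⬝ᵥ C *ᵥ (fun l => (e l : R)) ≠ 0 := by
  classical
  by_cases hdiag : ∃ i, C i i ≠ 0
  · obtain ⟨i, hi⟩ := hdiag
    refine ⟨Pi.single i 1, i, by simp, ?_⟩
    have he : (fun l => ((Pi.single i 1 : κ → ℕ) l : R)) = Pi.single i 1 := by
      ext l; simp [Pi.single_apply]
    simpa [he] using hi
  · push Not at hdiag
    obtain ⟨i, j, hij⟩ : ∃ i j, C i j ≠ 0 := by
      by_contra! h
      exact hC0 (Matrix.ext h)
    have hne : i ≠ j := by
      rintro rfl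
      exact hij (hdiag i)
    refine ⟨Pi.single i 1 + Pi.single j 1, i, by simp [hne], ?_⟩
    have he : (fun l => ((Pi.single i 1 + Pi.single j 1 : κ → ℕ) l : R)) =
        Pi.single i 1 + Pi.single j 1 := by
      ext l; simp [Pi.single_apply]
    have hval : C j i + C i j = 2 * C i j := by rw [hC.apply, two_mul]
    rw [he]
    simpa [add_dotProduct, mulVec_add, hdiag, hval, NeZero.ne] using hij

variable [Field k] [Field K] [Algebra k K] {C : Matrix κ κ K} {S : Set K}

theorem mem_closureAdjoin_of_dotProduct_mulVec_mem {e g : κ → K} {t : K}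
    (hC : ∀ i j, C i j ∈ closureAdjoin k S) (he : ∀ i, e i ∈ closureAdjoin k S)
    (hg : ∀ i, g i ∈ closureAdjoin k S) (he0 : e ⬝ᵥ C *ᵥ e ≠ 0)
    (h : (t • e + g) ⬝ᵥ C *ᵥ (t • e + g) ∈ closureAdjoin k S) : t ∈ closureAdjoin k S := by
  refine mem_closureAdjoin_of_quadratic (dotProduct_mulVec_mem hC he he)
    (add_mem (dotProduct_mulVec_mem hC he hg) (dotProduct_mulVec_mem hC hg he))
    (sub_mem (dotProduct_mulVec_mem hC hg hg) h) he0 ?_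
  simp only [mulVec_add, mulVec_smul, dotProduct_add, add_dotProduct, dotProduct_smul,
    smul_dotProduct, smul_eq_mul]
  ring

variable {c : Matrix κ ν K} {s : ε → Finset ν}

/- Within the block `s a` only the entry of row `i₀` in column `p a` is not known to lie in the
closure, and the block equation is quadratic in it with leading coefficient `e ⬝ᵥ C *ᵥ e`. -/
theorem entry_mem_closureAdjoin_of_sum_dotProduct_mulVec_eq_zero
    (hC : ∀ i j, C i j ∈ closureAdjoin k S) {e : κ → K} (he : ∀ i, e i ∈ closureAdjoin k S)
    (he0 : e ⬝ᵥ C *ᵥ e ≠ 0) {i₀ : κ} (hs : Pairwise (Function.onFun Disjoint s)) {p : ε → ν}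
    (hp : ∀ a, p a ∈ s a) (hsum : ∀ a, ∑ n ∈ s a, c.col n ⬝ᵥ C *ᵥ c.col n = 0)
    (hline : ∀ i n, c i n - c i₀ n * e i ∈ closureAdjoin k S)
    (hfree : ∀ n ∉ Set.range p, c i₀ n ∈ closureAdjoin k S) (i : κ) (n : ν) :
    c i n ∈ closureAdjoin k S := by
  classical
  have entry_mem {n : ν} (hn : c i₀ n ∈ closureAdjoin k S) (i : κ) :
      c i n ∈ closureAdjoin k S := by
    simpa using add_mem (hline i n) (mul_mem hn (he i))
  by_cases hn : n ∈ Set.range p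
  · obtain ⟨a, rfl⟩ := hn
    have hrest : ∀ n ∈ (s a).erase (p a), n ∉ Set.range p := by
      rintro _ hn ⟨b, rfl⟩
      have hba : b ≠ a := fun h => (Finset.mem_erase.mp hn).1 (h ▸ rfl)
      exact Finset.disjoint_left.mp (hs hba) (hp b) (Finset.mem_of_mem_erase hn)
    have hcol : c.col (p a) = c i₀ (p a) • e + fun i => c i (p a) - c i₀ (p a) * e i := by
      ext i; simp [Matrix.col]
    refine entry_mem (mem_closureAdjoin_of_dotProduct_mulVec_mem hC he (hline · (p a)) he0 ?_) i
    rw [← hcol, eq_neg_of_add_eq_zero_left ((Finset.add_sum_erase _ _ (hp a)).trans (hsum a))]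
    refine neg_mem (sum_mem fun n hn => ?_)
    have hmem := entry_mem (hfree n (hrest n hn))
    exact dotProduct_mulVec_mem hC hmem hmem
  · exact entry_mem (hfree n hn) i

theorem card_le_card_of_sum_dotProduct_mulVec_eq_zero [Finite ν] [Fintype ε] [NeZero (2 : K)]
    (hc : AlgebraicIndependent k fun x : κ × ν => c x.1 x.2) (hCsymm : C.IsSymm) (hC0 : C ≠ 0)
    {T : Finset K} (hC : ∀ i j, C i j ∈ Algebra.adjoin k (T : Set K))
    (hs : Pairwise (Function.onFun Disjoint s)) (hne : ∀ a, (s a).Nonempty)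
    (hsum : ∀ a, ∑ n ∈ s a, c.col n ⬝ᵥ C *ᵥ c.col n = 0) :
    Fintype.card ε ≤ T.card := by
  classical
  cases nonempty_fintype ν
  obtain ⟨e, i₀, hei, he0⟩ := exists_natCast_dotProduct_mulVec_ne_zero hCsymm hC0
  choose p hp using hne
  have hp_inj : Function.Injective fun a => (i₀, p a) := fun a b hab => by
    by_contra hne
    have hpab : p a = p b := congrArg Prod.snd hab
    exact Finset.disjoint_left.mp (hs hne) (hp a) (hpab ▸ hp b)
  let pivots : Finset (κ × ν) := Finset.univ.image fun a => (i₀, p a)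
  let g : κ × ν → K := fun x => if x.1 = i₀ then c i₀ x.2 else c x.1 x.2 - c i₀ x.2 * e x.1
  let G : Finset K := T ∪ pivotsᶜ.image g
  have hg {x : κ × ν} (hx : x ∉ pivots) : g x ∈ closureAdjoin k (G : Set K) :=
    subset_closureAdjoin <| Finset.mem_union_right _ <|
      Finset.mem_image_of_mem g (Finset.mem_compl.mpr hx)
  have hmem : ∀ x : κ × ν, c x.1 x.2 ∈ closureAdjoin k (G : Set K) := fun x => by
    refine entry_mem_closureAdjoin_of_sum_dotProduct_mulVec_eq_zero (e := fun l => (e l : K))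
      (i₀ := i₀) (fun i j => adjoin_le_closureAdjoin <|
        Algebra.adjoin_mono (Finset.coe_subset.mpr Finset.subset_union_left) (hC i j))
      (fun i => natCast_mem _ (e i)) he0 hs hp hsum (fun i n => ?_) (fun n hn => ?_) x.1 x.2
    · by_cases hi : i = i₀
      · simp [hi, hei]
      · simpa only [g, hi, if_false] using hg (x := (i, n)) (by simp [pivots, Ne.symm hi])
    · simpa only [g, if_true] using hg (x := (i₀, n)) (by simpa [pivots] using hn)
  have hcard := card_le_card_of_forall_mem_closureAdjoin hc hmem
  have hG : G.card ≤ T.card + pivotsᶜ.card :=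
    (Finset.card_union_le _ _).trans (Nat.add_le_add_left Finset.card_image_le _)
  have hpivots : pivots.card = Fintype.card ε := Finset.card_image_of_injective _ hp_inj
  have hcompl := Finset.card_compl_add_card pivots
  lia

end QuadraticForm

section RankOne

variable {μ : Type*}

/-- A symmetric matrix over a commutative ring all of whose `2 × 2` minors vanish. Over a field
these are the symmetric matrices of rank at most one, but unlike the rank this condition is
preserved by every ring homomorphism. -/
structure IsSymmRankLEOne {R : Type*} [CommRing R] (A : Matrix μ μ R) : Prop where
  isSymm : A.IsSymm
  mul_eq_mul : ∀ i j k l, A i j * A k l = A i l * A k j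

namespace IsSymmRankLEOne

theorem map_of_pointwise {X R R' : Type*} [CommRing R] [CommRing R'] (φ : (X → R) →+* R')
    {A : X → Matrix μ μ R} (hA : ∀ t, IsSymmRankLEOne (A t)) :
    IsSymmRankLEOne (Matrix.of fun i j => φ fun t => A t i j) where
  isSymm := Matrix.ext fun i j => congrArg φ (funext fun t => (hA t).isSymm.apply i j)
  mul_eq_mul i j k l := by
    simp only [of_apply, ← map_mul]
    exact congrArg φ (funext fun t => (hA t).mul_eq_mul i j k l)

theorem of_rank_le_one {K : Type*} [Field K] [Fintype μ] {A : Matrix μ μ K} (hA : A.IsSymm)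
    (hrank : A.rank ≤ 1) : IsSymmRankLEOne A where
  isSymm := hA
  mul_eq_mul i j k l := by
    rw [rank_eq_finrank_span_cols] at hrank
    obtain ⟨v, hv⟩ := finrank_le_one_iff.mp hrank
    have hcol (j : μ) : ∃ a : K, ∀ i, A i j = a * (v : μ → K) i := by
      obtain ⟨a, ha⟩ := hv ⟨A.col j, Submodule.subset_span ⟨j, rfl⟩⟩
      exact ⟨a, fun i => (congrFun (congrArg Subtype.val ha) i).symm⟩
    obtain ⟨a, ha⟩ := hcol j
    obtain ⟨b, hb⟩ := hcol l
    rw [ha i, hb k, hb i, ha k]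
    ring

variable {k K : Type*} [CommRing k] [Field K] [Algebra k K] {A : Matrix μ μ K}

theorem exists_diag_ne_zero (hA : IsSymmRankLEOne A) (hA0 : A ≠ 0) : ∃ i, A i i ≠ 0 := by
  by_contra! hdiag
  refine hA0 (Matrix.ext fun i j => ?_)
  have hminor := hA.mul_eq_mul i j j i
  rwa [hdiag, hdiag, mul_zero, hA.isSymm.apply i j, mul_self_eq_zero] at hminor

theorem exists_div_mem_adjoin [Fintype μ] (hA : IsSymmRankLEOne A) {i : μ} (hi : A i i ≠ 0) :
    ∃ T : Finset K, T.card < Fintype.card μ ∧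
      ∀ j l, A j l / A i i ∈ Algebra.adjoin k (T : Set K) := by
  classical
  let T : Finset K := (Finset.univ.erase i).image fun j => A j i / A i i
  have hcol (j : μ) : A j i / A i i ∈ Algebra.adjoin k (T : Set K) := by
    by_cases hj : j = i
    · rw [hj, div_self hi]
      exact one_mem _
    · exact Algebra.subset_adjoin (Finset.mem_image_of_mem _ (by simpa using hj))
  refine ⟨T, Finset.card_image_le.trans_lt (Finset.card_erase_lt_of_mem (Finset.mem_univ i)),
    fun j l => ?_⟩
  have hfactor : A j l / A i i = A j i / A i i * (A l i / A i i) := by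
    rw [hA.isSymm.apply i l, div_mul_div_comm, ← hA.mul_eq_mul j l i i, mul_div_mul_right _ _ hi]
  exact hfactor ▸ mul_mem (hcol j) (hcol l)

theorem exists_smul_apply_mem_adjoin [Fintype μ] {B : Matrix μ μ K} (hA : IsSymmRankLEOne A)
    (hB : IsSymmRankLEOne B) (hA0 : A ≠ 0) (hB0 : B ≠ 0) :
    ∃ r : K, r ≠ 0 ∧ ∃ T : Finset K, T.card < 2 * Fintype.card μ ∧
      ∀ i j, (r • A) i j ∈ Algebra.adjoin k (T : Set K) ∧
        (r • B) i j ∈ Algebra.adjoin k (T : Set K) := by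
  classical
  obtain ⟨i, hi⟩ := hA.exists_diag_ne_zero hA0
  obtain ⟨j, hj⟩ := hB.exists_diag_ne_zero hB0
  obtain ⟨TA, hTA, hA_mem⟩ := hA.exists_div_mem_adjoin (k := k) hi
  obtain ⟨TB, hTB, hB_mem⟩ := hB.exists_div_mem_adjoin (k := k) hj
  let T : Finset K := insert (B j j / A i i) (TA ∪ TB)
  have hcard := (Finset.card_insert_le (B j j / A i i) (TA ∪ TB)).trans
    (Nat.succ_le_succ (Finset.card_union_le _ _))
  have hTA_sub : TA ⊆ T := Finset.subset_union_left.trans (Finset.subset_insert _ _)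
  have hTB_sub : TB ⊆ T := Finset.subset_union_right.trans (Finset.subset_insert _ _)
  have hratio : B j j / A i i ∈ Algebra.adjoin k (T : Set K) :=
    Algebra.subset_adjoin (Finset.mem_insert_self _ _)
  refine ⟨(A i i)⁻¹, inv_ne_zero hi, T, by lia, fun a b => ⟨?_, ?_⟩⟩
  · rw [Matrix.smul_apply, smul_eq_mul, inv_mul_eq_div]
    exact Algebra.adjoin_mono (Finset.coe_subset.mpr hTA_sub) (hA_mem a b)
  · rw [Matrix.smul_apply, smul_eq_mul, inv_mul_eq_div, ← div_mul_div_cancel₀ hj]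
    exact mul_mem (Algebra.adjoin_mono (Finset.coe_subset.mpr hTB_sub) (hB_mem a b)) hratio

end IsSymmRankLEOne

end RankOne

section ExtendForm

variable {μ κ R : Type*} [CommRing R] [DecidableEq κ] [Fintype μ]

/-- The matrix on `κ` of the quadratic form `w ↦ (w ∘ u) ⬝ᵥ A *ᵥ (w ∘ u)`. -/
def extendForm (u : μ → κ) (A : Matrix μ μ R) : Matrix κ κ R :=
  (1 : Matrix κ κ R).submatrix id u * A * (1 : Matrix κ κ R).submatrix u id

variable {u v : μ → κ} {A B : Matrix μ μ R}

theorem extendForm_isSymm (hA : A.IsSymm) : (extendForm u A).IsSymm := by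
  simp [IsSymm, extendForm, transpose_mul, hA.eq, Matrix.mul_assoc]

theorem dotProduct_extendForm_mulVec [Fintype κ] (w : κ → R) :
    w ⬝ᵥ extendForm u A *ᵥ w = (w ∘ u) ⬝ᵥ A *ᵥ (w ∘ u) := by
  have hright : (1 : Matrix κ κ R).submatrix u id *ᵥ w = w ∘ u := by
    ext i; simp [mulVec, one_apply, dotProduct]
  have hleft : w ᵥ* (1 : Matrix κ κ R).submatrix id u = w ∘ u := by
    ext i; simp [vecMul, one_apply, dotProduct]
  rw [extendForm, ← mulVec_mulVec, ← mulVec_mulVec, hright, dotProduct_mulVec, hleft]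

theorem extendForm_apply_apply (hu : u.Injective) (i j : μ) :
    extendForm u A (u i) (u j) = A i j := by
  classical
  simp [extendForm, mul_apply, one_apply, hu.eq_iff]

theorem extendForm_apply_of_notMem_range {i j : κ} (h : i ∉ Set.range u ∨ j ∉ Set.range u) :
    extendForm u A i j = 0 := by
  rcases h with h | h
  · have hne (l : μ) : i ≠ u l := fun hl => h ⟨l, hl.symm⟩
    simp [extendForm, mul_apply, one_apply, hne]
  · have hne (l : μ) : u l ≠ j := fun hl => h ⟨l, hl⟩
    simp [extendForm, mul_apply, one_apply, hne]

theorem extendForm_apply_mem {k : Type*} [CommRing k] [Algebra k R] {F : Subalgebra k R}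
    (hA : ∀ i j, A i j ∈ F) (i j : κ) : extendForm u A i j ∈ F := by
  have hone (i j : κ) : (1 : Matrix κ κ R) i j ∈ F := by
    rw [one_apply]; split_ifs
    exacts [one_mem F, zero_mem F]
  exact sum_mem fun l _ => mul_mem (sum_mem fun m _ => mul_mem (hone i _) (hA m l)) (hone _ j)

theorem eq_of_extendForm_eq_extendForm (hu : u.Injective) (hv : v.Injective)
    (huv : ∀ i j, u i = v j → i = j) (h : extendForm u A = extendForm v B) : A = B := by
  have key (i : μ) : u i = v i ∨ u i ∉ Set.range v ∧ v i ∉ Set.range u := by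
    by_cases hi : u i = v i
    · exact Or.inl hi
    · exact Or.inr ⟨fun ⟨j, hj⟩ => hi (huv i j hj.symm ▸ hj.symm),
        fun ⟨j, hj⟩ => hi (huv j i hj ▸ hj)⟩
  ext i j
  rw [← extendForm_apply_apply (A := A) hu, ← extendForm_apply_apply (A := B) hv, ← h]
  by_cases hij : u i = v i ∧ u j = v j
  · rw [hij.1, hij.2]
  · have hout : (u i ∉ Set.range v ∨ u j ∉ Set.range v) ∧
        (v i ∉ Set.range u ∨ v j ∉ Set.range u) := by
      have hi := key i
      have hj := key j
      tauto
    rw [extendForm_apply_of_notMem_range hout.2, h, extendForm_apply_of_notMem_range hout.1]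

end ExtendForm

section AgreesOnBlocks

variable {μ κ ν ε : Type*} [Fintype μ]

theorem map_sum_dotProduct_mulVec_col {X R R' : Type*} [CommRing R] [CommRing R']
    (φ : (X → R) →+* R') (P : X → Matrix μ ν R) (A : X → Matrix μ μ R) (t : Finset ν) :
    φ (fun x => ∑ n ∈ t, (P x).col n ⬝ᵥ A x *ᵥ (P x).col n) =
      ∑ n ∈ t, (Matrix.of fun i n => φ fun x => P x i n).col n ⬝ᵥ
        (Matrix.of fun i j => φ fun x => A x i j) *ᵥ
          (Matrix.of fun i n => φ fun x => P x i n).col n := by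
  have hfun : (fun x => ∑ n ∈ t, (P x).col n ⬝ᵥ A x *ᵥ (P x).col n) =
      ∑ n ∈ t, ∑ i, (fun x => P x i n) * ∑ j, (fun x => A x i j) * fun x => P x j n := by
    ext x; simp [dotProduct, mulVec, Matrix.col]
  rw [hfun]
  simp only [map_sum, map_mul]
  rfl

/-- For every block of indices, the sum of the quadratic form `A` over the columns of `P` in the
block equals the sum of the quadratic form `B` over the columns of `Q`. -/
def AgreesOnBlocks {R : Type*} [CommRing R] (s : ε → Finset ν) (P Q : Matrix μ ν R)
    (A B : Matrix μ μ R) : Prop :=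
  ∀ a, ∑ n ∈ s a, P.col n ⬝ᵥ A *ᵥ P.col n = ∑ n ∈ s a, Q.col n ⬝ᵥ B *ᵥ Q.col n

variable {s : ε → Finset ν}

namespace AgreesOnBlocks

theorem map_of_pointwise {X R R' : Type*} [CommRing R] [CommRing R'] (φ : (X → R) →+* R')
    {P Q : X → Matrix μ ν R} {A B : X → Matrix μ μ R}
    (h : ∀ x, AgreesOnBlocks s (P x) (Q x) (A x) (B x)) :
    AgreesOnBlocks s (Matrix.of fun i n => φ fun x => P x i n)
      (Matrix.of fun i n => φ fun x => Q x i n) (Matrix.of fun i j => φ fun x => A x i j)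
      (Matrix.of fun i j => φ fun x => B x i j) := fun a => by
  rw [← map_sum_dotProduct_mulVec_col, ← map_sum_dotProduct_mulVec_col]
  exact congrArg φ (funext fun x => h x a)

end AgreesOnBlocks

/-- A pair of distinct symmetric matrices of rank one that the sums of their quadratic forms over
the blocks of columns of `P` and of `Q` do not tell apart. -/
structure IsAmbiguousPair {K : Type*} [CommRing K] (s : ε → Finset ν) (P Q : Matrix μ ν K)
    (A B : Matrix μ μ K) : Prop where
  left : IsSymmRankLEOne A
  right : IsSymmRankLEOne B
  left_ne_zero : A ≠ 0
  right_ne_zero : B ≠ 0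
  ne : A ≠ B
  agreesOnBlocks : AgreesOnBlocks s P Q A B

namespace IsAmbiguousPair

theorem of_rank_eq_one {K : Type*} [Field K] {P Q : Matrix μ ν K} {A B : Matrix μ μ K}
    (hA : A.IsSymm) (hB : B.IsSymm) (hA1 : A.rank = 1) (hB1 : B.rank = 1) (hAB : A ≠ B)
    (h : AgreesOnBlocks s P Q A B) : IsAmbiguousPair s P Q A B where
  left := .of_rank_le_one hA hA1.le
  right := .of_rank_le_one hB hB1.le
  left_ne_zero := by rintro rfl; simp at hA1
  right_ne_zero := by rintro rfl; simp at hB1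
  ne := hAB
  agreesOnBlocks := h

theorem map_of_pointwise {X k K : Type*} [Field k] [CommRing K] [Nontrivial K] (φ : (X → k) →+* K)
    {P Q : X → Matrix μ ν k} {A B : X → Matrix μ μ k}
    (h : ∀ x, IsAmbiguousPair s (P x) (Q x) (A x) (B x)) :
    IsAmbiguousPair s (Matrix.of fun i n => φ fun x => P x i n)
      (Matrix.of fun i n => φ fun x => Q x i n) (Matrix.of fun i j => φ fun x => A x i j)
      (Matrix.of fun i j => φ fun x => B x i j) := by
  have ne_of_pointwise {C D : X → Matrix μ μ k} (hCD : ∀ x, C x ≠ D x) :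
      (Matrix.of fun i j => φ fun x => C x i j) ≠ Matrix.of fun i j => φ fun x => D x i j := by
    obtain ⟨⟨i, j⟩, hij⟩ := exists_map_ne_zero_of_forall_exists_ne_zero φ
      (f := fun p : μ × μ => (fun x => C x p.1 p.2) - fun x => D x p.1 p.2) fun x => by
        by_contra! h0
        exact hCD x (Matrix.ext fun i j => sub_eq_zero.mp (h0 (i, j)))
    rw [map_sub] at hij
    exact fun heq => hij (sub_eq_zero.mpr (congrFun₂ heq i j))
  have map_zero_matrix : (Matrix.of fun _ _ => φ fun _ => 0 : Matrix μ μ K) = 0 :=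
    Matrix.ext fun _ _ => map_zero φ
  exact {
    left := .map_of_pointwise φ fun x => (h x).left
    right := .map_of_pointwise φ fun x => (h x).right
    left_ne_zero := map_zero_matrix ▸ ne_of_pointwise (D := 0) fun x => (h x).left_ne_zero
    right_ne_zero := map_zero_matrix ▸ ne_of_pointwise (D := 0) fun x => (h x).right_ne_zero
    ne := ne_of_pointwise fun x => (h x).ne
    agreesOnBlocks := .map_of_pointwise φ fun x => (h x).agreesOnBlocks }

variable [Finite κ] [Finite ν] [Fintype ε] {k K : Type*} [Field k] [Field K] [Algebra k K]
  {u v : μ → κ} {A B : Matrix μ μ K} {c : Matrix κ ν K}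

theorem card_lt_two_mul_card [NeZero (2 : K)]
    (h : IsAmbiguousPair s (c.submatrix u id) (c.submatrix v id) A B)
    (hc : AlgebraicIndependent k fun x : κ × ν => c x.1 x.2)
    (hu : u.Injective) (hv : v.Injective) (huv : ∀ i j, u i = v j → i = j)
    (hs : Pairwise (Function.onFun Disjoint s)) (hne : ∀ a, (s a).Nonempty) :
    Fintype.card ε < 2 * Fintype.card μ := by
  classical
  cases nonempty_fintype κ
  obtain ⟨r, hr, T, hT, hmem⟩ :=
    h.left.exists_smul_apply_mem_adjoin (k := k) h.right h.left_ne_zero h.right_ne_zero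
  let C : Matrix κ κ K := extendForm u (r • A) - extendForm v (r • B)
  have hCsymm : C.IsSymm := (extendForm_isSymm (h.left.isSymm.smul r)).sub
    (extendForm_isSymm (h.right.isSymm.smul r))
  have hC0 : C ≠ 0 := fun h0 => h.ne <| smul_right_injective _ hr <|
    eq_of_extendForm_eq_extendForm hu hv huv (sub_eq_zero.mp h0)
  have hC : ∀ i j, C i j ∈ Algebra.adjoin k (T : Set K) := fun i j =>
    sub_mem (extendForm_apply_mem (fun i j => (hmem i j).1) i j)
      (extendForm_apply_mem (fun i j => (hmem i j).2) i j)
  have hsum : ∀ a, ∑ n ∈ s a, c.col n ⬝ᵥ C *ᵥ c.col n = 0 := fun a => by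
    have hval (n : ν) : c.col n ⬝ᵥ C *ᵥ c.col n =
        r * ((c.submatrix u id).col n ⬝ᵥ A *ᵥ (c.submatrix u id).col n) -
          r * ((c.submatrix v id).col n ⬝ᵥ B *ᵥ (c.submatrix v id).col n) := by
      simp only [C, sub_mulVec, dotProduct_sub, dotProduct_extendForm_mulVec, smul_mulVec,
        dotProduct_smul, smul_eq_mul]
      rfl
    simp only [hval, Finset.sum_sub_distrib, ← Finset.mul_sum]
    rw [h.agreesOnBlocks a, sub_self]
  exact (card_le_card_of_sum_dotProduct_mulVec_eq_zero hc hCsymm hC0 hC hs hne hsum).trans_lt hT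

theorem exists_eval_eq_zero [NeZero (2 : k)] (hu : u.Injective) (hv : v.Injective)
    (huv : ∀ i j, u i = v j → i = j) (hs : Pairwise (Function.onFun Disjoint s))
    (hne : ∀ a, (s a).Nonempty) (hcard : 2 * Fintype.card μ ≤ Fintype.card ε) :
    ∃ q : MvPolynomial (κ × ν) k, q ≠ 0 ∧ ∀ (c : Matrix κ ν k) (A B : Matrix μ μ k),
      IsAmbiguousPair s (c.submatrix u id) (c.submatrix v id) A B →
        MvPolynomial.eval (fun x => c x.1 x.2) q = 0 := by
  let X := {x : Matrix κ ν k × Matrix μ μ k × Matrix μ μ k //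
    IsAmbiguousPair s (x.1.submatrix u id) (x.1.submatrix v id) x.2.1 x.2.2}
  let coord : κ × ν → X → k := fun p x => x.1.1 p.1 p.2
  by_contra! hq
  have hcoord : AlgebraicIndependent k coord := by
    rw [algebraicIndependent_iff]
    intro q hq0
    by_contra hqne
    obtain ⟨c, A, B, h, heval⟩ := hq q hqne
    refine heval ?_
    have hval := MvPolynomial.comp_aeval_apply coord (Pi.evalAlgHom k _ (⟨(c, A, B), h⟩ : X)) q
    rw [hq0, map_zero] at hval
    simpa [MvPolynomial.aeval_eq_eval] using hval.symm
  obtain ⟨K, _, _, φ, hφ⟩ := exists_algHom_field_algebraicIndependent hcoord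
  have : NeZero (2 : K) := ⟨by
    rw [← map_ofNat (algebraMap k K) 2]
    exact (map_ne_zero _).mpr (NeZero.ne 2)⟩
  have hpair := map_of_pointwise φ.toRingHom fun x : X => x.2
  exact (card_lt_two_mul_card (c := Matrix.of fun i n => φ (coord (i, n))) hpair hφ
    hu hv huv hs hne).not_ge hcard

end IsAmbiguousPair

end AgreesOnBlocks

section GenericMatrix

variable {k κ ν : Type*}

theorem exists_ne_zero_forall_eval_ne_zero_linearIndependent_row [Field k] [Finite κ] [Finite ν]
    (hcard : Nat.card κ ≤ Nat.card ν) :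
    ∃ d : MvPolynomial (κ × ν) k, d ≠ 0 ∧ ∀ c : Matrix κ ν k,
      MvPolynomial.eval (fun x => c x.1 x.2) d ≠ 0 → LinearIndependent k c.row := by
  classical
  cases nonempty_fintype κ
  cases nonempty_fintype ν
  obtain ⟨f⟩ : Nonempty (κ ↪ ν) := by
    rwa [Function.Embedding.nonempty_iff_card_le, ← Nat.card_eq_fintype_card,
      ← Nat.card_eq_fintype_card]
  have hrename : Function.Injective (MvPolynomial.rename (R := k) (Prod.map (id : κ → κ) f)) :=
    MvPolynomial.rename_injective _ (Function.injective_id.prodMap f.injective)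
  refine ⟨MvPolynomial.rename (Prod.map id f) (mvPolynomialX κ κ k).det,
    (map_ne_zero_iff _ hrename).mpr (det_mvPolynomialX_ne_zero κ k), fun c hc => ?_⟩
  have hminor : MvPolynomial.eval (fun x => c x.1 x.2)
      (MvPolynomial.rename (Prod.map id f) (mvPolynomialX κ κ k).det) = (c.submatrix id f).det := by
    rw [MvPolynomial.eval_rename, RingHom.map_det]
    congr 1
    ext i j
    simp
  exact .of_comp (LinearMap.funLeft k k f) (linearIndependent_rows_of_det_ne_zero (hminor ▸ hc))

theorem exists_eval_ne_zero_and_linearIndependent_row [Field k] [Infinite k] [Finite κ] [Finite ν]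
    {q : MvPolynomial (κ × ν) k} (hq : q ≠ 0) (hcard : Nat.card κ ≤ Nat.card ν) :
    ∃ c : Matrix κ ν k, MvPolynomial.eval (fun x => c x.1 x.2) q ≠ 0 ∧
      LinearIndependent k c.row := by
  obtain ⟨d, hd, hindep⟩ :=
    exists_ne_zero_forall_eval_ne_zero_linearIndependent_row (k := k) hcard
  obtain ⟨x, hx⟩ : ∃ x, MvPolynomial.eval x (q * d) ≠ 0 := by
    by_contra! h
    exact mul_ne_zero hq hd (MvPolynomial.funext fun x => by simpa using h x)
  rw [map_mul] at hx
  exact ⟨Matrix.of fun i n => x (i, n), left_ne_zero_of_mul hx, hindep _ (right_ne_zero_of_mul hx)⟩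

theorem span_image_inf_span_image {R V ι : Type*} [Ring R] [AddCommGroup V] [Module R V]
    {w : ι → V} (hw : LinearIndependent R w) (s t : Set ι) :
    Submodule.span R (w '' s) ⊓ Submodule.span R (w '' t) = Submodule.span R (w '' (s ∩ t)) := by
  simp only [Finsupp.span_image_eq_map_linearCombination]
  rw [← Submodule.map_inf _ hw, ← Finsupp.supported_inter]

end GenericMatrix

section StackedFrames

variable {M N s : ℕ}

/-- Row indices of a matrix that stores a pair of `M × N` matrices whose first `s` rows agree: all
rows of the first one and, in the right summand, the rows of the second one from the `s`-th on. -/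
abbrev StackedRow (M s : ℕ) : Type := Fin M ⊕ {i : Fin M // s ≤ (i : ℕ)}

/-- The row of the stacked matrix that is the `i`-th row of the second matrix of the pair. -/
def secondRow (s : ℕ) (i : Fin M) : StackedRow M s :=
  if h : s ≤ (i : ℕ) then Sum.inr ⟨i, h⟩ else Sum.inl i

theorem eq_of_inl_eq_secondRow {i j : Fin M} (h : Sum.inl i = secondRow s j) : i = j := by
  unfold secondRow at h
  split_ifs at h
  exact Sum.inl_injective h

theorem secondRow_injective : Function.Injective (secondRow (M := M) s) := by
  intro i j h
  unfold secondRow at h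
  split_ifs at h <;> simp_all

theorem range_inl_inter_range_secondRow (hs : s ≤ M) :
    Set.range Sum.inl ∩ Set.range (secondRow (M := M) s) =
      Set.range (Sum.inl ∘ Fin.castLE hs) := by
  ext x
  constructor
  · rintro ⟨⟨i, rfl⟩, ⟨j, hj⟩⟩
    obtain rfl := eq_of_inl_eq_secondRow hj.symm
    have hi : (i : ℕ) < s := by
      by_contra hi
      simp [secondRow, not_lt.mp hi] at hj
    exact ⟨⟨i, hi⟩, rfl⟩
  · rintro ⟨i, rfl⟩
    exact ⟨⟨_, rfl⟩, Fin.castLE hs i, by simp [secondRow]⟩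

theorem card_stackedRow_le : Nat.card (StackedRow M s) ≤ 2 * M := by
  rw [Nat.card_sum, Nat.card_fin, two_mul]
  gcongr
  simpa using Nat.card_le_card_of_injective _ (Subtype.val_injective (p := fun i : Fin M => s ≤ i))

/-- The matrix with all rows of `P` and the rows of `Q` from the `s`-th on. -/
def stack {ν R : Type*} (s : ℕ) (P Q : Matrix (Fin M) ν R) : Matrix (StackedRow M s) ν R :=
  Matrix.fromRows P (Q.submatrix Subtype.val id)

theorem stack_submatrix_secondRow {ν R : Type*} {P Q : Matrix (Fin M) ν R}
    (h : ∀ i : Fin M, (i : ℕ) < s → P i = Q i) : (stack s P Q).submatrix (secondRow s) id = Q := by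
  ext i n
  by_cases hi : s ≤ (i : ℕ)
  · simp [stack, secondRow, hi]
  · simpa [stack, secondRow, hi] using congrFun (h i (not_le.mp hi)) n

theorem stack_submatrix {ν R : Type*} (c : Matrix (StackedRow M s) ν R) :
    stack s (c.submatrix Sum.inl id) (c.submatrix (secondRow s) id) = c := by
  ext (i | i) n
  · rfl
  · simp [stack, secondRow, i.2]

theorem isZariskiOpenPairR_eval_stack_ne_zero (q : MvPolynomial (StackedRow M s × ZMod N) ℝ) :
    IsZariskiOpenPairR {p : Matrix (Fin M) (ZMod N) ℝ × Matrix (Fin M) (ZMod N) ℝ |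
      MvPolynomial.eval (fun x => stack s p.1 p.2 x.1 x.2) q ≠ 0} := by
  let f (x : StackedRow M s × ZMod N) : (Fin M × ZMod N) ⊕ (Fin M × ZMod N) :=
    x.1.elim (fun i => Sum.inl (i, x.2)) fun i => Sum.inr (i, x.2)
  refine ⟨{MvPolynomial.rename f q}, Set.ext fun p => ?_⟩
  have hentries : (fun x : StackedRow M s × ZMod N => stack s p.1 p.2 x.1 x.2) =
      Sum.elim (fun a => p.1 a.1 a.2) (fun a => p.2 a.1 a.2) ∘ f := by
    ext ⟨i | i, n⟩ <;> rfl
  simp [MvPolynomial.eval_rename, hentries]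

variable [NeZero N]

theorem rowSpanR_submatrix {κ : Type*} (c : Matrix κ (ZMod N) ℝ) (u : Fin M → κ) :
    rowSpanR (c.submatrix u id) = Submodule.span ℝ (c.row '' Set.range u) := by
  rw [← Set.range_comp]
  rfl

theorem isSOverlappingPairR_of_linearIndependent_row (hs : s ≤ M)
    {c : Matrix (StackedRow M s) (ZMod N) ℝ} (hc : LinearIndependent ℝ c.row) :
    IsSOverlappingPairR s (c.submatrix Sum.inl id, c.submatrix (secondRow s) id) := by
  have rank_submatrix {u : Fin M → StackedRow M s} (hu : u.Injective) :
      (c.submatrix u id).rank = M := by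
    have hrows : LinearIndependent ℝ (c.submatrix u id).row := hc.comp u hu
    rw [hrows.rank_matrix, Fintype.card_fin]
  refine ⟨rank_submatrix Sum.inl_injective, rank_submatrix secondRow_injective, fun i hi => ?_, ?_⟩
  · ext n
    simp [secondRow, not_le.mpr hi]
  · rw [rowSpanR_submatrix, rowSpanR_submatrix, span_image_inf_span_image hc,
      range_inl_inter_range_secondRow hs, ← Set.range_comp, finrank_span_eq_card, Fintype.card_fin]
    exact hc.comp _ (Sum.inl_injective.comp (Fin.castLE_injective hs))

end StackedFrames

section FoldBlocks

/-- The orbit `{k, -k}` of `ZMod N` under negation, for `0 ≤ k ≤ N / 2`. -/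
def foldBlock (N : ℕ) {Nh : ℕ} (k : Fin (Nh + 1)) : Finset (ZMod N) :=
  {(k : ZMod N), -(k : ZMod N)}

variable {N Nh : ℕ}

theorem foldBlock_nonempty (k : Fin (Nh + 1)) : (foldBlock N k).Nonempty :=
  Finset.insert_nonempty _ _

theorem natAbs_valMinAbs_of_mem_foldBlock (hN : N = 2 * Nh) {k : Fin (Nh + 1)} {n : ZMod N}
    (hn : n ∈ foldBlock N k) : n.valMinAbs.natAbs = k := by
  have hk : ((k : ℕ) : ZMod N).valMinAbs = (k : ℕ) := ZMod.valMinAbs_natCast_of_le_half (by lia)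
  rcases Finset.mem_insert.mp hn with rfl | hn
  · rw [hk, Int.natAbs_natCast]
  · rw [Finset.mem_singleton.mp hn, ZMod.natAbs_valMinAbs_neg, hk, Int.natAbs_natCast]

theorem pairwise_disjoint_foldBlock (hN : N = 2 * Nh) :
    Pairwise (Function.onFun Disjoint (foldBlock N (Nh := Nh))) := fun _ _ hkl =>
  Finset.disjoint_left.mpr fun _ hk hl => hkl <| Fin.ext <|
    (natAbs_valMinAbs_of_mem_foldBlock hN hk).symm.trans (natAbs_valMinAbs_of_mem_foldBlock hN hl)

theorem agreesOnBlocks_foldBlock {M : ℕ} [NeZero N] (hN : N = 2 * Nh)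
    {P Q : Matrix (Fin M) (ZMod N) ℝ} {A B : Matrix (Fin M) (Fin M) ℝ}
    (h : SatisfiesSystem Nh P Q A B) : AgreesOnBlocks (foldBlock N (Nh := Nh)) P Q A B := by
  obtain ⟨h_zero, h_half, h_pair⟩ := h
  have sum_fixed {n : ZMod N} (hn : -n = n) (P : Matrix (Fin M) (ZMod N) ℝ)
      (A : Matrix (Fin M) (Fin M) ℝ) :
      ∑ m ∈ {n, -n}, P.col m ⬝ᵥ A *ᵥ P.col m = P.col n ⬝ᵥ A *ᵥ P.col n := by
    rw [hn, Finset.pair_eq_singleton, Finset.sum_singleton]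
  rintro ⟨k, hk⟩
  rw [foldBlock]
  rcases k.eq_zero_or_pos with rfl | hpos
  · rw [sum_fixed (by simp), sum_fixed (by simp), Nat.cast_zero]
    exact h_zero
  obtain rfl | hlt := (Nat.lt_succ_iff.mp hk).eq_or_lt
  · have hhalf : -(k : ZMod N) = k := by
      rw [neg_eq_iff_add_eq_zero, ← Nat.cast_add, ← two_mul, ← hN, ZMod.natCast_self]
    rw [sum_fixed hhalf, sum_fixed hhalf]
    exact h_half
  · have hne : (k : ZMod N) ≠ -(k : ZMod N) := fun h => by
      have hval : (k : ZMod N).val = k := ZMod.val_natCast_of_lt (by lia)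
      rcases (ZMod.neg_eq_self_iff _).mp h.symm with h0 | h2
      · rw [h0, ZMod.val_zero] at hval; lia
      · lia
    rw [Finset.sum_pair hne, Finset.sum_pair hne]
    exact h_pair k hpos hlt

end FoldBlocks

/-- If N is even and N > 4M−4, then for a generic pair of s-overlapping frames on ℝ^M
there is no pair of distinct rank-one real symmetric matrices satisfying (★). -/
theorem generic_overlapping_pairs_real (M N Nh s : ℕ) [NeZero N]
    (hN : N = 2 * Nh) (hNh : 0 < Nh) (hs : s ≤ M)
    (h : (N : ℤ) > 4 * (M : ℤ) - 4) :
    ∃ W : Set (Matrix (Fin M) (ZMod N) ℝ × Matrix (Fin M) (ZMod N) ℝ),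
      IsZariskiOpenPairR W ∧ (∃ p ∈ W, IsSOverlappingPairR s p) ∧
      ∀ p ∈ W, IsSOverlappingPairR s p →
        ¬ ∃ A B : Matrix (Fin M) (Fin M) ℝ,
            A.IsSymm ∧ B.IsSymm ∧ A.rank = 1 ∧ B.rank = 1 ∧ A ≠ B ∧
            SatisfiesSystem Nh p.1 p.2 A B := by
  obtain ⟨q, hq0, hq⟩ := IsAmbiguousPair.exists_eval_eq_zero (k := ℝ) (μ := Fin M)
    (u := (Sum.inl : Fin M → StackedRow M s)) Sum.inl_injective secondRow_injective
    (fun _ _ => eq_of_inl_eq_secondRow) (pairwise_disjoint_foldBlock hN) foldBlock_nonempty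
    (by simp only [Fintype.card_fin]; lia)
  refine ⟨_, isZariskiOpenPairR_eval_stack_ne_zero (s := s) q, ?_, ?_⟩
  · obtain ⟨c, hcq, hc⟩ := exists_eval_ne_zero_and_linearIndependent_row hq0
      (card_stackedRow_le.trans (by simp only [Nat.card_zmod]; lia))
    exact ⟨(c.submatrix Sum.inl id, c.submatrix (secondRow s) id),
      by simpa [stack_submatrix] using hcq, isSOverlappingPairR_of_linearIndependent_row hs hc⟩
  · rintro p hpq ⟨-, -, hrows, -⟩ ⟨A, B, hA, hB, hA1, hB1, hne, hsys⟩
    have hpair : IsAmbiguousPair (foldBlock N (Nh := Nh)) p.1 p.2 A B :=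
      .of_rank_eq_one hA hB hA1 hB1 hne (agreesOnBlocks_foldBlock hN hsys)
    rw [← stack_submatrix_secondRow hrows] at hpair
    exact hpq (hq (stack s p.1 p.2) A B hpair)
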